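/- arXiv:0802.2342 — 2 statements merged into one kernel-verified Lean document; each statement's English description precedes it below -/
import Mathlib

section
/- Let n ≥ 3 and m ≥ 3 be integers, let A, B be the two endpoints of the deleted edge of K_m (i.e. a fixed pair of adjacent vertices of K_m), and let 1 ≤ k ≤ n' where n = 2n' if n is even and n = 2n'−1 if n is odd. Then the number of graph homomorphisms f : BW_n → K_m that map the hub into {A, B} and map exactly k edges of BW_n onto {A, B} equals 2·Σ' [Π_j (m−2)(m−3)^{i_j−i_{j−1}−2}] + 2·Σ'' (m−2)(m−3)^{i_1−2}·[Π_j (m−2)(m−3)^{i_j−i_{j−1}−2}] + 2·Σ''' [Π_j (m−2)(m−3)^{i_j−i_{j−1}−2}]·(m−2)(m−3)^{n−i_k−1} + 2·Σ'''' (m−2)^2·(m−3)^{i_1+n−i_k−3}·[Π_j (m−2)(m−3)^{i_j−i_{j−1}−2}], where every sum ranges over strictly increasing integer sequences i_1 < i_2 < ⋯ < i_k satisfying i_j − i_{j−1} > 1 for 2 ≤ j ≤ k; in Σ' the range is 1 = i_1 < ⋯ < i_k = n, in Σ'' it is 1 < i_1 < ⋯ < i_k = n, in Σ''' it is 1 =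 i_1 < ⋯ < i_k < n, in Σ'''' it is 1 < i_1 < ⋯ < i_k < n; and each product Π_j runs over the indices 2 ≤ j ≤ k (an empty product equals 1). Moreover, for n' < k ≤ n there are no such homomorphisms. -/
/-- For a sequence `c = (i_1, …, i_k)` (indexed by `Fin k`), `gapAt c j = i_j - i_{j-1}`,
the difference of the `j`-th entry and the previous one (junk at `j = 0`). -/
def gapAt {k n : ℕ} (c : Fin k → Fin n) (j : Fin k) : ℕ :=
  (c j).val - (c ⟨j.val - 1, lt_of_le_of_lt (Nat.sub_le _ _) j.isLt⟩).val

/-- A strictly increasing sequence `i_1 < i_2 < ⋯ < i_k` with `i_j - i_{j-1} > 1`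
for `2 ≤ j ≤ k`. -/
abbrev SeqOKGt1 {k n : ℕ} (c : Fin k → Fin n) : Prop :=
  (∀ a b : Fin k, a < b → c a < c b) ∧ ∀ j : Fin k, j.val ≠ 0 → 1 < gapAt c j

/-- The product `Π_j (m-2)·(m-3)^{i_j - i_{j-1} - 2}` over the indices `2 ≤ j ≤ k`
(an empty product equals `1`). -/
def hubGapProd (m : ℕ) {k n : ℕ} (c : Fin k → Fin n) : ℕ :=
  ∏ j : Fin k,
    if j.val = 0 then 1 else (m - 2) * (m - 3) ^ (gapAt c j - 2)

/-- The broken wheel `BW_n` on `n` spokes: vertex `0` is the hub, adjacent to all of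
`1, …, n`; the path part has edges `i(i+1)` for `1 ≤ i ≤ n-1`. -/
def brokenWheel (n : ℕ) : SimpleGraph (Fin (n + 1)) :=
  SimpleGraph.fromRel (fun a b => a.val = 0 ∨ (a.val ≠ 0 ∧ a.val + 1 = b.val))

/-- The number of edges of the broken wheel `BW_n` (spokes `0i` and path edges `i(i+1)`)
that `f` maps onto the pair `{A, B}`. -/
def bwEdgeCount (n m : ℕ) (A B : Fin m) (f : Fin (n + 1) → Fin m) : ℕ :=
  (Finset.univ.filter (fun i : Fin (n + 1) =>
      i.val ≠ 0 ∧ ({f ⟨0, Nat.succ_pos n⟩, f i} : Finset (Fin m)) = {A, B})).card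
  + (Finset.univ.filter (fun i : Fin n =>
      i.val ≠ 0 ∧ ({f ⟨i.val, Nat.lt_succ_of_lt i.isLt⟩,
                    f ⟨i.val + 1, Nat.succ_lt_succ i.isLt⟩} : Finset (Fin m)) = {A, B})).card

/-!
Fix the colour `h ∈ {A, B}` of the hub and let `o` be the other colour of the pair. The rim avoids
`h`, so the edges mapped onto `{A, B}` are the spokes ending at a vertex of colour `o`. Let
`i_1 < ⋯ < i_k` be these vertices and colour the rim from `1` to `n`: a vertex of colour `o` leaves
no choice (and is impossible right after another one), a vertex that follows the hub or a vertex of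
colour `o` has `m - 2` possible colours, and any other vertex has `m - 3`. Multiplying the numbers
of choices gap by gap yields the products of the formula, whose four sums distinguish whether the
runs before `i_1` and after `i_k` are empty. As `i_j - i_{j-1} ≥ 2`, we have `2 k - 1 ≤ i_k ≤ n`, so
no sequence exists when `k > n'`.
-/

section PathColorings

open Finset

variable {C : Type*} [DecidableEq C]

/-- The proper list colourings of the path `0, 1, …, n`: vertex `v` takes its colour from the list
`L v`. -/
def pathListColorings [Fintype C] {n : ℕ} (L : Fin (n + 1) → Finset C) :
    Finset (Fin (n + 1) → C) :=
  {f | (∀ v, f v ∈ L v) ∧ ∀ i : Fin n, f i.castSucc ≠ f i.succ}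

variable [Fintype C] {n : ℕ}

theorem mem_pathListColorings {L : Fin (n + 1) → Finset C} {f : Fin (n + 1) → C} :
    f ∈ pathListColorings L ↔ (∀ v, f v ∈ L v) ∧ ∀ i : Fin n, f i.castSucc ≠ f i.succ := by
  simp [pathListColorings]

theorem snoc_mem_pathListColorings {L : Fin (n + 2) → Finset C} {g : Fin (n + 1) → C} {x : C} :
    (Fin.snoc g x : Fin (n + 2) → C) ∈ pathListColorings L ↔
      g ∈ pathListColorings (fun v => L v.castSucc) ∧
        x ∈ (L (Fin.last (n + 1))).erase (g (Fin.last n)) := by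
  simp only [mem_pathListColorings, mem_erase, Fin.forall_fin_succ', Fin.snoc_castSucc,
    Fin.succ_last, Fin.succ_castSucc, Fin.snoc_last]
  tauto

theorem card_pathListColorings_zero (L : Fin 1 → Finset C) : #(pathListColorings L) = #(L 0) := by
  refine card_nbij' (fun f => f 0) (fun x _ => x) ?_ ?_ ?_ ?_
  · exact fun f hf => (mem_pathListColorings.1 hf).1 0
  · simp +contextual [Set.MapsTo, mem_pathListColorings, Fin.forall_fin_one]
  · exact fun f _ => funext fun v => congrArg f (Fin.eq_zero v).symm
  · exact fun x _ => rfl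

theorem card_pathListColorings_succ (L : Fin (n + 2) → Finset C) :
    #(pathListColorings L) =
      ∑ g ∈ pathListColorings (fun v => L v.castSucc),
        #((L (Fin.last (n + 1))).erase (g (Fin.last n))) := by
  rw [← card_sigma]
  refine card_nbij' (fun f => ⟨Fin.init f, f (Fin.last _)⟩) (fun p => Fin.snoc p.1 p.2) ?_ ?_ ?_ ?_
  · intro f hf
    rwa [mem_coe, mem_sigma, ← snoc_mem_pathListColorings, Fin.snoc_init_self]
  · exact fun p hp => snoc_mem_pathListColorings.2 (mem_sigma.1 hp)
  · exact fun f _ => Fin.snoc_init_self f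
  · exact fun p _ => by simp only [Fin.init_snoc, Fin.snoc_last]

theorem card_pathListColorings (L : Fin (n + 1) → Finset C) (d : Fin n → ℕ)
    (hd : ∀ i : Fin n, ∀ x ∈ L i.castSucc, #((L i.succ).erase x) = d i) :
    #(pathListColorings L) = #(L 0) * ∏ i, d i := by
  induction n with
  | zero => rw [card_pathListColorings_zero, Fin.prod_univ_zero, mul_one]
  | succ n ih =>
    have hlast : ∀ g ∈ pathListColorings (fun v => L v.castSucc),
        #((L (Fin.last (n + 1))).erase (g (Fin.last n))) = d (Fin.last n) :=
      fun g hg => hd (Fin.last n) _ ((mem_pathListColorings.1 hg).1 _)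
    rw [card_pathListColorings_succ, sum_const_nat hlast, ih _ _ fun i => hd i.castSucc,
      Fin.prod_univ_castSucc, mul_assoc, Fin.castSucc_zero]

end PathColorings

section PatternColorings

open Finset

variable {C : Type*} [Fintype C] [DecidableEq C] {h o : C} {S : Finset ℕ} {n : ℕ}

/-- Proper colourings of the broken wheel on `n` spokes in which the hub, vertex `0`, has colour
`h`. That vertices other than the hub avoid `h` expresses properness along the spokes. -/
abbrev IsHubColoring (h : C) (f : Fin (n + 1) → C) : Prop :=
  (∀ v, f v = h ↔ v = 0) ∧ ∀ i : Fin n, f i.castSucc ≠ f i.succ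

/-- The colours that vertex `v` of a broken wheel may receive when the hub has colour `h` and the
vertices of colour `o` are those in `S`. -/
def patternColors (h o : C) (S : Finset ℕ) (v : ℕ) : Finset C :=
  if v = 0 then {h} else if v ∈ S then {o} else {h, o}ᶜ

/-- The number of colours, out of `q`, that extend a colouring of the vertices `0, …, i` of a broken
wheel to vertex `i + 1`, when the vertices of a fixed colour other than that of the hub are to be
those in `S`. The vertex before `1` is the hub, whose colour is excluded from the rim anyway, so
that `i = 0` leaves as many colours as `i ∈ S` when `i + 1 ∉ S`. -/
def stepCount (q : ℕ) (S : Finset ℕ) (i : ℕ) : ℕ :=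
  if i + 1 ∈ S then (if i ∈ S then 0 else 1) else if i = 0 ∨ i ∈ S then q - 2 else q - 3

theorem mem_patternColors (hho : h ≠ o) (hS : 0 ∉ S) {v : ℕ} {x : C} :
    x ∈ patternColors h o S v ↔ (x = h ↔ v = 0) ∧ (x = o ↔ v ∈ S) := by
  unfold patternColors
  split_ifs with hv hvS <;> simp only [mem_singleton, mem_compl, mem_insert] <;> grind

theorem card_patternColors_erase (hho : h ≠ o) (hS : 0 ∉ S) {i : ℕ} {x : C}
    (hx : x ∈ patternColors h o S i) :
    #((patternColors h o S (i + 1)).erase x) = stepCount (Fintype.card C) S i := by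
  obtain ⟨hxh, hxo⟩ := (mem_patternColors hho hS).1 hx
  rw [patternColors, if_neg i.succ_ne_zero, stepCount]
  split_ifs with hi hiS hprev
  · simp [hxo.2 hiS]
  · rw [erase_eq_of_notMem (by rwa [mem_singleton, hxo]), card_singleton]
  · have hx' : x ∉ ({h, o}ᶜ : Finset C) := by
      simp only [mem_compl, mem_insert, mem_singleton, hxh, hxo, not_not]
      exact hprev
    rw [erase_eq_of_notMem hx', card_compl, card_pair hho]
  · have hx' : x ∈ ({h, o}ᶜ : Finset C) := by
      simp only [mem_compl, mem_insert, mem_singleton, hxh, hxo]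
      exact hprev
    rw [card_erase_of_mem hx', card_compl, card_pair hho, Nat.sub_sub]

theorem card_hubColorings_of_pattern (hho : h ≠ o) (hS : 0 ∉ S) (n : ℕ) :
    #{f : Fin (n + 1) → C | IsHubColoring h f ∧ ∀ v, f v = o ↔ (v : ℕ) ∈ S} =
      ∏ i ∈ range n, stepCount (Fintype.card C) S i := by
  rw [← Fin.prod_univ_eq_prod_range]
  calc
    _ = #(pathListColorings fun v : Fin (n + 1) => patternColors h o S v) := by
      congr 1
      ext f
      simp only [mem_filter, mem_univ, true_and, mem_pathListColorings, mem_patternColors hho hS,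
        Fin.val_eq_zero_iff, forall_and, and_right_comm]
    _ = #(patternColors h o S 0) * ∏ i : Fin n, stepCount (Fintype.card C) S i :=
      card_pathListColorings _ _ fun _ _ hx => card_patternColors_erase hho hS hx
    _ = _ := by rw [patternColors, if_pos rfl, card_singleton, one_mul]

end PatternColorings

section Sequences

open Finset

-- Strict monotonicity is spelled out so that the filter is decidable.
theorem sum_powersetCard_univ_eq_sum_strictMono {α M : Type*} [LinearOrder α] [Fintype α]
    [AddCommMonoid M] (k : ℕ) (F : Finset α → M) :
    ∑ S ∈ powersetCard k univ, F S =
      ∑ c : Fin k → α with (∀ a b, a < b → c a < c b), F (univ.image c) := by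
  refine sum_bij' (fun S hS => S.orderEmbOfFin (mem_powersetCard.1 hS).2)
    (fun c _ => univ.image c) ?_ ?_ ?_ ?_ ?_
  · exact fun S hS => mem_filter.2 ⟨mem_univ _, fun a b hab => OrderEmbedding.strictMono _ hab⟩
  · intro c hc
    have hinj : Function.Injective c := StrictMono.injective fun a b => (mem_filter.1 hc).2 a b
    rw [mem_powersetCard_univ, card_image_of_injective _ hinj, card_univ, Fintype.card_fin]
  · exact fun S _ => image_orderEmbOfFin_univ S _
  · intro c hc
    exact (orderEmbOfFin_unique _ (fun j => mem_image_of_mem c (mem_univ j))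
      fun a b => (mem_filter.1 hc).2 a b).symm
  · intro S _
    rw [image_orderEmbOfFin_univ]

theorem prod_Ico_eq_prod_prod_Ico {M : Type*} [CommMonoid M] {l : ℕ} {c : Fin (l + 1) → ℕ}
    (hc : Monotone c) (F : ℕ → M) :
    ∏ i ∈ Ico (c 0) (c (Fin.last l)), F i =
      ∏ j : Fin l, ∏ i ∈ Ico (c j.castSucc) (c j.succ), F i := by
  induction l with
  | zero => simp
  | succ l ih =>
    rw [Fin.prod_univ_castSucc, ← prod_Ico_consecutive F
      (hc (Fin.zero_le (Fin.last l).castSucc)) (hc (Fin.le_last _))]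
    congr 1
    exact ih (hc.comp Fin.strictMono_castSucc.monotone)

variable {α : Type*} [LinearOrder α] {l : ℕ} {c : Fin (l + 1) → α} {a : α}

theorem notMem_image_of_lt_zero (hc : Monotone c) (ha : a < c 0) : a ∉ univ.image c := by
  simp only [mem_image, mem_univ, true_and, not_exists]
  exact fun j => (ha.trans_le (hc (Fin.zero_le j))).ne'

theorem notMem_image_of_last_lt (hc : Monotone c) (ha : c (Fin.last l) < a) :
    a ∉ univ.image c := by
  simp only [mem_image, mem_univ, true_and, not_exists]
  exact fun j => ((hc (Fin.le_last j)).trans_lt ha).ne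

theorem notMem_image_of_lt_of_lt (hc : Monotone c) {j : Fin l} (ha : c j.castSucc < a)
    (ha' : a < c j.succ) : a ∉ univ.image c := by
  simp only [mem_image, mem_univ, true_and, not_exists]
  rintro t rfl
  exact (Fin.castSucc_lt_iff_succ_le.1 (hc.reflect_lt ha)).not_gt (hc.reflect_lt ha')

end Sequences

section GapProducts

open Finset

variable {S : Finset ℕ} {a b : ℕ}

/-- The number of proper colourings, with `q` colours, of the `g - 1` rim vertices strictly between
two rim vertices of a common colour that are `g ≥ 1` steps apart, using neither that colour nor the
one of the hub. The value at `g = 0` is meaningless. -/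
def gapCount (q g : ℕ) : ℕ :=
  if g = 1 then 1 else (q - 2) * (q - 3) ^ (g - 2)

theorem prod_Ico_stepCount_of_free (q : ℕ) (ha : a = 0 ∨ a ∈ S) (hab : a ≤ b)
    (hS : ∀ i, a < i → i ≤ b → i ∉ S) :
    ∏ i ∈ Ico a b, stepCount q S i = gapCount q (b + 1 - a) := by
  rcases hab.eq_or_lt with rfl | hlt
  · simp [gapCount]
  have hfirst : stepCount q S a = q - 2 := by
    rw [stepCount, if_neg (hS _ (by omega) (by omega)), if_pos ha]
  have hnext : ∀ i ∈ Ico (a + 1) b, stepCount q S i = q - 3 := by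
    intro i hi
    obtain ⟨hai, hib⟩ := mem_Ico.1 hi
    rw [stepCount, if_neg (hS _ (by omega) (by omega)), if_neg]
    exact not_or.2 ⟨by omega, hS i hai hib.le⟩
  rw [prod_eq_prod_Ico_succ_bot hlt, hfirst, prod_congr rfl hnext, prod_const, Nat.card_Ico,
    gapCount, if_neg (by omega)]
  congr 2
  omega

theorem prod_Ico_stepCount_succ_of_free (q : ℕ) (ha : a = 0 ∨ a ∈ S) (hab : a ≤ b)
    (hS : ∀ i, a < i → i ≤ b → i ∉ S) (hb : b ∉ S) (hb' : b + 1 ∈ S) :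
    ∏ i ∈ Ico a (b + 1), stepCount q S i = gapCount q (b + 1 - a) := by
  rw [prod_Ico_succ_top hab, prod_Ico_stepCount_of_free q ha hab hS, stepCount, if_pos hb',
    if_neg hb, mul_one]

theorem prod_Ico_stepCount_of_consecutive (q : ℕ) (ha : a ∈ S) (hb : b ∈ S) (hab : a < b)
    (hS : ∀ i, a < i → i < b → i ∉ S) :
    ∏ i ∈ Ico a b, stepCount q S i =
      if 1 < b - a then (q - 2) * (q - 3) ^ (b - a - 2) else 0 := by
  obtain ⟨b, rfl⟩ : ∃ b', b = b' + 1 := ⟨b - 1, by omega⟩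
  split_ifs with hgap
  · rw [prod_Ico_stepCount_succ_of_free q (Or.inr ha) (by omega)
      (fun i hai hib => hS i hai (by omega)) (hS b (by omega) (by omega)) hb, gapCount,
      if_neg (by omega)]
  · obtain rfl : a = b := by omega
    simp [stepCount, ha, hb]

theorem prod_range_stepCount_image (q : ℕ) {l n : ℕ} {c : Fin (l + 1) → ℕ} (hc : StrictMono c)
    (hc0 : 1 ≤ c 0) (hcn : c (Fin.last l) ≤ n) :
    ∏ i ∈ range n, stepCount q (univ.image c) i =
      gapCount q (c 0) *
        (if ∀ j : Fin l, 1 < c j.succ - c j.castSucc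
          then ∏ j : Fin l, (q - 2) * (q - 3) ^ (c j.succ - c j.castSucc - 2) else 0) *
        gapCount q (n + 1 - c (Fin.last l)) := by
  have hmem (j) : c j ∈ univ.image c := mem_image_of_mem c (mem_univ j)
  have hfirst : ∏ i ∈ Ico 0 (c 0), stepCount q (univ.image c) i = gapCount q (c 0) := by
    have hlow {i : ℕ} (hi : i < c 0) := notMem_image_of_lt_zero hc.monotone hi
    obtain ⟨b, hb⟩ : ∃ b, c 0 = b + 1 := ⟨c 0 - 1, by omega⟩
    rw [hb, prod_Ico_stepCount_succ_of_free q (Or.inl rfl) b.zero_le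
      (fun i _ hi => hlow (by omega)) (hlow (by omega)) (hb ▸ hmem 0), Nat.sub_zero]
  have hmid (j : Fin l) :=
    prod_Ico_stepCount_of_consecutive q (hmem j.castSucc) (hmem j.succ)
      (hc Fin.castSucc_lt_succ) fun i => notMem_image_of_lt_of_lt hc.monotone
  have hlast := prod_Ico_stepCount_of_free q (Or.inr (hmem (Fin.last l))) hcn
    fun i hi _ => notMem_image_of_last_lt hc.monotone hi
  rw [range_eq_Ico, ← prod_Ico_consecutive _ (Nat.zero_le _) hcn,
    ← prod_Ico_consecutive _ (Nat.zero_le _) (hc.monotone (Fin.zero_le (Fin.last l))),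
    prod_Ico_eq_prod_prod_Ico hc.monotone, hfirst, hlast, prod_congr rfl fun j _ => hmid j,
    prod_ite_zero]
  simp only [mem_univ, forall_const]

end GapProducts

section GapSequences

open Finset

variable {l n : ℕ}

theorem gapAt_succ (c : Fin (l + 1) → Fin n) (j : Fin l) :
    gapAt c j.succ = (c j.succ : ℕ) - c j.castSucc :=
  rfl

theorem seqOKGt1_iff_of_strictMono {c : Fin (l + 1) → Fin n} (hc : StrictMono c) :
    SeqOKGt1 c ↔ ∀ j : Fin l, 1 < (c j.succ : ℕ) - c j.castSucc := by
  rw [SeqOKGt1, and_iff_right fun _ _ hab => hc hab, Fin.forall_fin_succ]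
  simp only [Fin.val_zero, ne_eq, not_true_eq_false, false_imp_iff, true_and, Fin.val_succ,
    Nat.succ_ne_zero, not_false_eq_true, true_imp_iff, gapAt_succ]

theorem hubGapProd_eq_prod_succ (q : ℕ) (c : Fin (l + 1) → Fin n) :
    hubGapProd q c =
      ∏ j : Fin l, (q - 2) * (q - 3) ^ ((c j.succ : ℕ) - c j.castSucc - 2) := by
  simp [hubGapProd, Fin.prod_univ_succ, gapAt_succ]

theorem SeqOKGt1.two_mul_add_le {c : Fin (l + 1) → Fin n} (hc : SeqOKGt1 c)
    (j : Fin (l + 1)) : 2 * (j : ℕ) + c 0 ≤ c j := by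
  induction j using Fin.induction with
  | zero => simp
  | succ j ih =>
    have hgap := hc.2 j.succ (Nat.succ_ne_zero _)
    rw [gapAt_succ] at hgap
    simp only [Fin.val_succ, Fin.val_castSucc] at ih ⊢
    omega

/-- The number of proper colourings of the broken wheel on `n` spokes, with `q` colours, in which
the hub has a given colour and the vertices of another given colour are `c 0 < ⋯ < c l`, for a
sequence `c` of pairwise non-adjacent rim vertices. The runs before `c 0` and after `c l` are
counted as gaps starting at `0` and ending at `n + 1`. -/
def gapWeight (q : ℕ) (c : Fin (l + 1) → Fin (n + 1)) : ℕ :=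
  gapCount q (c 0) * hubGapProd q c * gapCount q (n + 1 - c (Fin.last l))

variable {C : Type*} [Fintype C] [DecidableEq C] {h o : C}

theorem card_hubColorings_of_strictMono (hho : h ≠ o) {c : Fin (l + 1) → Fin (n + 1)}
    (hc : StrictMono c) :
    #{f : Fin (n + 1) → C | IsHubColoring h f ∧ ({v | f v = o} : Finset _) = univ.image c} =
      if SeqOKGt1 c ∧ 1 ≤ (c 0).val then gapWeight (Fintype.card C) c else 0 := by
  by_cases hc0 : 1 ≤ (c 0).val
  · have hmono : StrictMono fun j => (c j : ℕ) := hc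
    have h0 : 0 ∉ univ.image fun j => (c j : ℕ) := notMem_image_of_lt_zero hmono.monotone hc0
    have hset (f : Fin (n + 1) → C) : ({v | f v = o} : Finset _) = univ.image c ↔
        ∀ v, f v = o ↔ (v : ℕ) ∈ univ.image fun j => (c j : ℕ) := by
      simp [Finset.ext_iff, Fin.ext_iff]
    simp only [hset, card_hubColorings_of_pattern hho h0,
      prod_range_stepCount_image _ hmono hc0 (Fin.is_le _), seqOKGt1_iff_of_strictMono hc, hc0,
      and_true, gapWeight, hubGapProd_eq_prod_succ, mul_ite, ite_mul, mul_zero, zero_mul]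
  · rw [if_neg fun hseq => hc0 hseq.2, card_eq_zero, filter_eq_empty_iff]
    rintro f - ⟨⟨hhub, -⟩, hf⟩
    have hmem : c 0 ∈ ({v | f v = o} : Finset _) := hf ▸ mem_image_of_mem c (mem_univ 0)
    have hzero : c 0 = 0 := Fin.ext (by simpa using hc0)
    exact hho (((hhub _).2 hzero).symm.trans (mem_filter.1 hmem).2)

theorem card_hubColorings_of_card_color (hho : h ≠ o) (n l : ℕ) :
    #{f : Fin (n + 1) → C | IsHubColoring h f ∧ #{v | f v = o} = l + 1} =
      ∑ c : Fin (l + 1) → Fin (n + 1) with SeqOKGt1 c ∧ 1 ≤ (c 0).val,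
        gapWeight (Fintype.card C) c := by
  calc
    _ = ∑ S ∈ powersetCard (l + 1) univ,
          #{f : Fin (n + 1) → C | IsHubColoring h f ∧ ({v | f v = o} : Finset _) = S} := by
      rw [card_eq_sum_card_fiberwise (f := fun f => ({v | f v = o} : Finset _))
        (t := powersetCard (l + 1) univ) fun f hf => mem_powersetCard_univ.2 (mem_filter.1 hf).2.2]
      refine sum_congr rfl fun S hS => ?_
      rw [filter_filter]
      congr 1
      ext f
      have hcard := mem_powersetCard_univ.1 hS
      simp only [mem_filter, mem_univ, true_and, and_assoc, and_congr_right_iff,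
        and_iff_right_iff_imp]
      rintro - - rfl
      exact hcard
    _ = ∑ c : Fin (l + 1) → Fin (n + 1) with (∀ a b, a < b → c a < c b),
          if SeqOKGt1 c ∧ 1 ≤ (c 0).val then gapWeight (Fintype.card C) c else 0 := by
      rw [sum_powersetCard_univ_eq_sum_strictMono]
      exact sum_congr rfl fun c hc =>
        card_hubColorings_of_strictMono hho fun a b => (mem_filter.1 hc).2 a b
    _ = _ := by
      rw [← sum_filter, filter_filter]
      congr 1
      ext c
      simp only [mem_filter, mem_univ, true_and, and_iff_right_iff_imp]
      exact fun hc => hc.1.1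

theorem sum_gapWeight_eq_add (q l n : ℕ) :
    ∑ c : Fin (l + 1) → Fin (n + 1) with SeqOKGt1 c ∧ 1 ≤ (c 0).val, gapWeight q c =
      ∑ c : Fin (l + 1) → Fin (n + 1) with
          SeqOKGt1 c ∧ (c 0).val = 1 ∧ (c (Fin.last l)).val = n,
        hubGapProd q c
      + ∑ c : Fin (l + 1) → Fin (n + 1) with
          SeqOKGt1 c ∧ 1 < (c 0).val ∧ (c (Fin.last l)).val = n,
        (q - 2) * (q - 3) ^ ((c 0).val - 2) * hubGapProd q c
      + ∑ c : Fin (l + 1) → Fin (n + 1) with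
          SeqOKGt1 c ∧ (c 0).val = 1 ∧ (c (Fin.last l)).val < n,
        hubGapProd q c * ((q - 2) * (q - 3) ^ (n - (c (Fin.last l)).val - 1))
      + ∑ c : Fin (l + 1) → Fin (n + 1) with
          SeqOKGt1 c ∧ 1 < (c 0).val ∧ (c (Fin.last l)).val < n,
        (q - 2) ^ 2 * (q - 3) ^ ((c 0).val + n - (c (Fin.last l)).val - 3) * hubGapProd q c := by
  simp only [sum_filter, ← sum_add_distrib]
  refine sum_congr rfl fun c _ => ?_
  by_cases hc : SeqOKGt1 c
  swap
  · simp only [hc, false_and, if_false, add_zero]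
  have hone : gapCount q 1 = 1 := if_pos rfl
  have hfirst (h0 : 1 < (c 0).val) : gapCount q (c 0) = (q - 2) * (q - 3) ^ ((c 0).val - 2) :=
    if_neg h0.ne'
  have hlast (hl : (c (Fin.last l)).val < n) : gapCount q (n + 1 - (c (Fin.last l)).val) =
      (q - 2) * (q - 3) ^ (n - (c (Fin.last l)).val - 1) := by
    rw [gapCount, if_neg (by omega)]
    congr 2
    omega
  simp only [eq_true hc, true_and, gapWeight]
  rcases lt_trichotomy (c 0).val 1 with h0 | h0 | h0 <;>
    rcases (Fin.is_le (c (Fin.last l))).eq_or_lt with hl | hl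
  · simp [h0.not_ge, h0.ne, h0.not_gt]
  · simp [h0.not_ge, h0.ne, h0.not_gt]
  · simp [h0, hl, hone]
  · simp [h0, hl, hl.ne, hone, hlast hl]
  · simp [h0, h0.le, h0.ne', hl, hone, hfirst h0]
  · have hexp : (c 0).val + n - (c (Fin.last l)).val - 3 =
        ((c 0).val - 2) + (n - (c (Fin.last l)).val - 1) := by omega
    simp only [h0, h0.le, h0.ne', hl, hl.ne, hfirst h0, hlast hl, hexp, pow_add, and_self,
      and_false, false_and, if_true, if_false, zero_add]
    ring

end GapSequences

section BrokenWheel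

open Finset

variable {n : ℕ}

theorem forall_brokenWheel_adj_ne_iff {C : Type*} {f : Fin (n + 1) → C} :
    (∀ a b, (brokenWheel n).Adj a b → f a ≠ f b) ↔ IsHubColoring (f 0) f := by
  have hadj (a b) : (brokenWheel n).Adj a b ↔ a ≠ b ∧
      ((a.val = 0 ∨ (a.val ≠ 0 ∧ a.val + 1 = b.val)) ∨
        (b.val = 0 ∨ (b.val ≠ 0 ∧ b.val + 1 = a.val))) :=
    SimpleGraph.fromRel_adj _ a b
  constructor
  · intro hf
    refine ⟨fun v => ⟨fun hv => ?_, fun hv => hv ▸ rfl⟩, fun i => hf _ _ ((hadj _ _).2 ?_)⟩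
    · by_contra hne
      exact hf v 0 ((hadj _ _).2 ⟨hne, Or.inr (Or.inl rfl)⟩) hv
    · refine ⟨Fin.castSucc_lt_succ.ne, Or.inl ?_⟩
      rw [Fin.val_castSucc, Fin.val_succ]
      tauto
  · rintro ⟨hhub, hrim⟩
    have hrel (a b : Fin (n + 1)) (hab : a ≠ b)
        (h : a.val = 0 ∨ (a.val ≠ 0 ∧ a.val + 1 = b.val)) : f a ≠ f b := by
      rcases h with ha | ⟨-, hsucc⟩
      · obtain rfl : a = 0 := Fin.ext ha
        exact fun heq => hab ((hhub b).1 heq.symm).symm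
      · have hb : b = Fin.succ ⟨a, by omega⟩ := Fin.ext hsucc.symm
        exact hb ▸ hrim ⟨a, by omega⟩
    intro a b hab
    obtain ⟨hne, h | h⟩ := (hadj a b).1 hab
    · exact hrel a b hne h
    · exact (hrel b a hne.symm h).symm

variable {m : ℕ} {A B : Fin m} {f : Fin (n + 1) → Fin m}

theorem bwEdgeCount_comm (A B : Fin m) (f : Fin (n + 1) → Fin m) :
    bwEdgeCount n m A B f = bwEdgeCount n m B A f := by
  rw [bwEdgeCount, bwEdgeCount, pair_comm A B]

theorem IsHubColoring.bwEdgeCount_eq (hAB : A ≠ B) (hf : IsHubColoring A f) :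
    bwEdgeCount n m A B f = #{v | f v = B} := by
  obtain ⟨hhub, -⟩ := hf
  have hspoke (v : Fin (n + 1)) :
      v.val ≠ 0 ∧ ({f ⟨0, n.succ_pos⟩, f v} : Finset (Fin m)) = {A, B} ↔ f v = B := by
    rw [show f ⟨0, n.succ_pos⟩ = A from (hhub 0).2 rfl]
    constructor
    · rintro ⟨-, hpair⟩
      have hB : B ∈ ({A, f v} : Finset (Fin m)) := hpair ▸ mem_insert_of_mem (mem_singleton_self B)
      exact ((mem_insert.1 hB).resolve_left hAB.symm |> mem_singleton.1).symm
    · rintro rfl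
      exact ⟨fun hv => hAB ((hhub v).2 (Fin.ext hv)).symm, rfl⟩
  have hrim (i : Fin n) : ¬ (i.val ≠ 0 ∧ ({f ⟨i.val, Nat.lt_succ_of_lt i.isLt⟩,
      f ⟨i.val + 1, Nat.succ_lt_succ i.isLt⟩} : Finset (Fin m)) = {A, B}) := by
    rintro ⟨hi, hpair⟩
    have hA : A ∈ ({A, B} : Finset (Fin m)) := mem_insert_self A {B}
    rw [← hpair, mem_insert, mem_singleton, eq_comm, hhub, @eq_comm _ A, hhub] at hA
    simp [Fin.ext_iff, hi] at hA
  simp only [bwEdgeCount, hspoke, hrim, filter_false, card_empty, add_zero]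

theorem card_brokenWheel_hom_eq_add (hAB : A ≠ B) (k : ℕ) :
    Nat.card {f : brokenWheel n →g (⊤ : SimpleGraph (Fin m)) //
        f ⟨0, n.succ_pos⟩ ∈ ({A, B} : Set (Fin m)) ∧ bwEdgeCount n m A B ⇑f = k} =
      #{f : Fin (n + 1) → Fin m | IsHubColoring A f ∧ #{v | f v = B} = k} +
      #{f : Fin (n + 1) → Fin m | IsHubColoring B f ∧ #{v | f v = A} = k} := by
  have hiff (f : Fin (n + 1) → Fin m) :
      ((∀ a b, (brokenWheel n).Adj a b → f a ≠ f b) ∧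
        f ⟨0, n.succ_pos⟩ ∈ ({A, B} : Set (Fin m)) ∧ bwEdgeCount n m A B f = k) ↔
      (IsHubColoring A f ∧ #{v | f v = B} = k) ∨ (IsHubColoring B f ∧ #{v | f v = A} = k) := by
    rw [forall_brokenWheel_adj_ne_iff]
    constructor
    · rintro ⟨hf, hA | hB, hk⟩
      · obtain rfl : f 0 = A := hA
        exact Or.inl ⟨hf, hf.bwEdgeCount_eq hAB ▸ hk⟩
      · obtain rfl : f 0 = B := hB
        exact Or.inr ⟨hf, hf.bwEdgeCount_eq hAB.symm ▸ bwEdgeCount_comm _ _ f ▸ hk⟩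
    · rintro (⟨hf, hk⟩ | ⟨hf, hk⟩)
      · obtain rfl : f 0 = A := (hf.1 0).2 rfl
        exact ⟨hf, Or.inl rfl, (hf.bwEdgeCount_eq hAB).trans hk⟩
      · obtain rfl : f 0 = B := (hf.1 0).2 rfl
        exact ⟨hf, Or.inr rfl,
          (bwEdgeCount_comm _ _ f).trans ((hf.bwEdgeCount_eq hAB.symm).trans hk)⟩
  rw [← card_union_of_disjoint, ← filter_or, ← Fintype.card_subtype, ← Nat.card_eq_fintype_card]
  · exact Nat.card_congr
      { toFun f := ⟨f.1, (hiff f.1).1 ⟨fun _ _ hab => f.1.map_adj hab, f.2⟩⟩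
        invFun f := ⟨⟨f.1, fun hab => ((hiff f.1).2 f.2).1 _ _ hab⟩, ((hiff f.1).2 f.2).2⟩ }
  · rw [disjoint_filter]
    rintro f - ⟨hA, -⟩ ⟨hB, -⟩
    exact hAB (((hA.1 0).2 rfl).symm.trans ((hB.1 0).2 rfl))

theorem card_brokenWheel_hom (hAB : A ≠ B) (n l : ℕ) :
    Nat.card {f : brokenWheel n →g (⊤ : SimpleGraph (Fin m)) //
        f ⟨0, n.succ_pos⟩ ∈ ({A, B} : Set (Fin m)) ∧ bwEdgeCount n m A B ⇑f = l + 1} =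
      2 * ∑ c : Fin (l + 1) → Fin (n + 1) with SeqOKGt1 c ∧ 1 ≤ (c 0).val, gapWeight m c := by
  rw [card_brokenWheel_hom_eq_add hAB, card_hubColorings_of_card_color hAB,
    card_hubColorings_of_card_color hAB.symm, Fintype.card_fin, two_mul]

end BrokenWheel

/-- For `n ≥ 3`, `m ≥ 3`, distinct vertices `A`, `B` of `K_m`, and `1 ≤ k ≤ n'`
(where `n = 2n'` if `n` is even and `n = 2n' - 1` if `n` is odd): the number of graph
homomorphisms `f : BW_n → K_m` mapping the hub into `{A, B}` and mapping exactly `k`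
edges of `BW_n` onto `{A, B}` is given by the four-fold sum over strictly increasing
sequences `i_1 < ⋯ < i_k` with `i_j - i_{j-1} > 1`; moreover for `n' < k ≤ n` there are
no such homomorphisms. -/
theorem stmt12 (n m n' k : ℕ) (hn : 3 ≤ n) (hm : 3 ≤ m)
    (A B : Fin m) (hAB : A ≠ B)
    (heven : Even n → n = 2 * n') (hodd : ¬ Even n → n = 2 * n' - 1)
    (hk1 : 1 ≤ k) (hk2 : k ≤ n')
    (N : ℕ → ℕ)
    (hN : ∀ j : ℕ, N j = Nat.card
      {f : brokenWheel n →g (⊤ : SimpleGraph (Fin m)) //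
        f ⟨0, Nat.succ_pos n⟩ ∈ ({A, B} : Set (Fin m)) ∧ bwEdgeCount n m A B ⇑f = j}) :
    (N k =
        2 * (∑ c ∈ Finset.univ.filter (fun c : Fin k → Fin (n + 1) =>
              SeqOKGt1 c ∧ (c ⟨0, by omega⟩).val = 1 ∧ (c ⟨k - 1, by omega⟩).val = n),
            hubGapProd m c)
        + 2 * (∑ c ∈ Finset.univ.filter (fun c : Fin k → Fin (n + 1) =>
              SeqOKGt1 c ∧ 1 < (c ⟨0, by omega⟩).val ∧ (c ⟨k - 1, by omega⟩).val = n),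
            (m - 2) * (m - 3) ^ ((c ⟨0, by omega⟩).val - 2) * hubGapProd m c)
        + 2 * (∑ c ∈ Finset.univ.filter (fun c : Fin k → Fin (n + 1) =>
              SeqOKGt1 c ∧ (c ⟨0, by omega⟩).val = 1 ∧ (c ⟨k - 1, by omega⟩).val < n),
            hubGapProd m c * ((m - 2) * (m - 3) ^ (n - (c ⟨k - 1, by omega⟩).val - 1)))
        + 2 * (∑ c ∈ Finset.univ.filter (fun c : Fin k → Fin (n + 1) =>
              SeqOKGt1 c ∧ 1 < (c ⟨0, by omega⟩).val ∧ (c ⟨k - 1, by omega⟩).val < n),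
            (m - 2) ^ 2 * (m - 3) ^ ((c ⟨0, by omega⟩).val + n - (c ⟨k - 1, by omega⟩).val - 3)
              * hubGapProd m c))
    ∧ (∀ j : ℕ, n' < j → j ≤ n → N j = 0) := by
  constructor
  · obtain ⟨l, rfl⟩ := Nat.exists_eq_succ_of_ne_zero (Nat.one_le_iff_ne_zero.1 hk1)
    rw [hN, card_brokenWheel_hom hAB, sum_gapWeight_eq_add]
    simp only [mul_add]
    rfl
  · intro j hj _
    obtain ⟨l, rfl⟩ := Nat.exists_eq_succ_of_ne_zero (Nat.ne_zero_of_lt hj)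
    have hlong : n < 2 * l + 1 := by grind
    rw [hN, card_brokenWheel_hom hAB, Finset.filter_false_of_mem, Finset.sum_empty, mul_zero]
    rintro c - ⟨hc, hc0⟩
    have hlast : 2 * l + (c 0).val ≤ c (Fin.last l) := hc.two_mul_add_le (Fin.last l)
    omega
end

section
/- Let n ≥ 3 and m ≥ 3 be integers, let A, B be the two endpoints of the deleted edge of K_m (i.e. a fixed pair of adjacent vertices of K_m), and let 1 ≤ k ≤ n' where n = 2n' if n is even and n = 2n'+1 if n is odd. Then the number of graph homomorphisms f : W_n → K_m that map the hub into {A, B} and map exactly k edges of W_n onto {A, B} equals 2·Σ' (m−2)(m−3)^{i_1−2}·[Π_j (m−2)(m−3)^{i_j−i_{j−1}−2}] + 2·Σ'' [Π_j (m−2)(m−3)^{i_j−i_{j−1}−2}]·(m−2)(m−3)^{n−i_k−1} + 2·Σ''' (m−2)(m−3)^{i_1+n−i_k−2}·[Π_j (m−2)(m−3)^{i_j−i_{j−1}−2}], where every sum ranges over strictly increasing integer sequences i_1 < i_2 < ⋯ < i_k satisfying i_j − i_{j−1} > 1 for 2 ≤ j ≤ k; in Σ' the range is 1 < i_1 < ⋯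 < i_k = n, in Σ'' it is 1 = i_1 < ⋯ < i_k < n, in Σ''' it is 1 < i_1 < ⋯ < i_k < n; and each product Π_j runs over the indices 2 ≤ j ≤ k (an empty product equals 1). Moreover, for n' < k ≤ n there are no such homomorphisms. -/
/-- The wheel `W_n` on `n` spokes: vertex `0` is the hub, adjacent to all of
`1, …, n`; the cycle part has edges `i(i+1)` for `1 ≤ i ≤ n-1` together with `n1`. -/
def wheelGraph (n : ℕ) : SimpleGraph (Fin (n + 1)) :=
  SimpleGraph.fromRel (fun a b =>
    a.val = 0 ∨ (a.val ≠ 0 ∧ a.val + 1 = b.val) ∨ (a.val = n ∧ b.val = 1))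

/-- The number of edges of the wheel `W_n` (spokes `0i`, cycle edges `i(i+1)` and `n1`)
that `f` maps onto the pair `{A, B}`. -/
def wEdgeCount (n m : ℕ) (A B : Fin m) (f : Fin (n + 1) → Fin m) : ℕ :=
  (Finset.univ.filter (fun i : Fin (n + 1) =>
      i.val ≠ 0 ∧ ({f ⟨0, Nat.succ_pos n⟩, f i} : Finset (Fin m)) = {A, B})).card
  + (Finset.univ.filter (fun i : Fin n =>
      i.val ≠ 0 ∧ ({f ⟨i.val, Nat.lt_succ_of_lt i.isLt⟩,
                    f ⟨i.val + 1, Nat.succ_lt_succ i.isLt⟩} : Finset (Fin m)) = {A, B})).card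
  + (if ({f ⟨n, Nat.lt_succ_self n⟩, f ⟨1 % (n + 1), Nat.mod_lt 1 (Nat.succ_pos n)⟩}
          : Finset (Fin m)) = {A, B} then 1 else 0)

/-! By symmetry the hub goes to `A`, at the cost of a factor 2. The homomorphism is then a proper
colouring of the rim, an `n`-cycle, by the `m - 1` colours other than `A`, and the edges mapped
onto `{A, B}` are the spokes ending in the colour class `S` of `B`, an independent set of the cycle.
Cut the cycle open at a vertex of `S` and colour step by step: there are `m - 2` choices after a
vertex of `S`, only one at a vertex of `S`, and `m - 3` elsewhere, so each nonempty independent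
set `S` of size `k` accounts for `(m - 2) ^ k * (m - 3) ^ (n - 2 * k)` colourings.
The exponents of `m - 3` in the three sums telescope to this same `n - 2 * k`, and the three index
ranges split the independent `k`-sets according to which of the adjacent vertices `1` and `n` they
contain. Finally, an independent set of the cycle has at most `n / 2` elements. -/

open Finset SimpleGraph

section ListColoring

variable {α : Type*} [DecidableEq α] {n : ℕ}

lemma card_path_listColoring (V : Fin (n + 1) → Finset α) (w : Fin n → ℕ)
    (hw : ∀ i, ∀ x ∈ V i.castSucc, #((V i.succ).erase x) = w i) :
    #{g ∈ Fintype.piFinset V | ∀ i : Fin n, g i.castSucc ≠ g i.succ} = #(V 0) * ∏ i, w i := by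
  induction n with
  | zero => simp
  | succ n ih =>
    set T := {g ∈ Fintype.piFinset (Fin.init V) | ∀ i : Fin n, g i.castSucc ≠ g i.succ} with hT
    have mem_iff (g : Fin (n + 2) → α) :
        (g ∈ Fintype.piFinset V ∧ ∀ i : Fin (n + 1), g i.castSucc ≠ g i.succ) ↔
          Fin.init g ∈ T ∧ g (Fin.last _) ∈ (V (Fin.last _)).erase (Fin.init g (Fin.last n)) := by
      rw [hT, mem_filter, Fin.mem_piFinset_iff_last_init, Fin.forall_fin_succ', mem_erase]
      simp only [Fin.init, Fin.succ_castSucc, Fin.succ_last]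
      grind
    have hstep : ∀ g ∈ T, #((V (Fin.last _)).erase (g (Fin.last n))) = w (Fin.last n) :=
      fun g hg => hw (Fin.last n) _ (Fintype.mem_piFinset.1 (mem_filter.1 hg).1 (Fin.last n))
    calc _ = #(T.sigma fun g => (V (Fin.last _)).erase (g (Fin.last n))) :=
          card_nbij' (fun g => ⟨Fin.init g, g (Fin.last _)⟩) (fun p => Fin.snoc p.1 p.2)
            (fun g hg => mem_sigma.2 ((mem_iff g).1 (mem_filter.1 hg)))
            (fun p hp => mem_filter.2 ((mem_iff _).2
              (by simpa only [Fin.init_snoc, Fin.snoc_last] using mem_sigma.1 hp)))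
            (fun g _ => Fin.snoc_init_self g) (fun p _ => by simp)
      _ = #T * w (Fin.last n) := by rw [card_sigma, sum_congr rfl hstep, sum_const, smul_eq_mul]
      _ = #(V 0) * ((∏ i : Fin n, w i.castSucc) * w (Fin.last n)) := by
        rw [hT, ih (Fin.init V) (Fin.init w) fun i => hw i.castSucc, mul_assoc]
        rfl
      _ = #(V 0) * ∏ i, w i := by rw [Fin.prod_univ_castSucc]

lemma forall_fin_add_one {r : Fin (n + 1) → Fin (n + 1) → Prop} :
    (∀ i, r i (i + 1)) ↔ (∀ i : Fin n, r i.castSucc i.succ) ∧ r (Fin.last n) 0 := by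
  simp [Fin.forall_fin_succ', Fin.coeSucc_eq_succ]

lemma card_cycle_listColoring_of_last (V : Fin (n + 1) → Finset α) (w : Fin (n + 1) → ℕ)
    (hw : ∀ i, ∀ x ∈ V i, #((V (i + 1)).erase x) = w i)
    (hV : #(V 0) = 1) (hlast : w (Fin.last n) = 1) :
    #{g ∈ Fintype.piFinset V | ∀ i, g i ≠ g (i + 1)} = ∏ i, w i := by
  have hclose : ∀ g ∈ Fintype.piFinset V, g (Fin.last n) ≠ g 0 := fun g hg h => by
    rw [Fintype.mem_piFinset] at hg
    have := hw (Fin.last n) _ (hg _)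
    rw [Fin.last_add_one, card_erase_of_mem (h ▸ hg 0), hV, hlast] at this
    exact zero_ne_one this
  have hpath := card_path_listColoring V (fun i => w i.castSucc) fun i => by
    simpa only [Fin.coeSucc_eq_succ] using hw i.castSucc
  rw [hV, one_mul] at hpath
  rw [Fin.prod_univ_castSucc, hlast, mul_one, ← hpath]
  refine congrArg card (filter_congr fun g hg => ?_)
  rw [forall_fin_add_one (r := fun i j => g i ≠ g j), and_iff_left (hclose g hg)]

lemma card_cycle_listColoring_rotate (V : Fin (n + 1) → Finset α) (s : Fin (n + 1)) :
    #{g ∈ Fintype.piFinset fun i => V (i + s) | ∀ i, g i ≠ g (i + 1)} =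
      #{g ∈ Fintype.piFinset V | ∀ i, g i ≠ g (i + 1)} := by
  let σ : Fin (n + 1) ≃ Fin (n + 1) := Equiv.addRight s
  refine (card_equiv (σ.symm.arrowCongr (Equiv.refl α)) fun g => ?_).symm
  simp only [mem_filter, Fintype.mem_piFinset, Equiv.arrowCongr_apply, Equiv.symm_symm,
    Equiv.coe_refl, Function.comp_apply, id]
  rw [← σ.forall_congr_right (q := fun i => g i ∈ V i),
    ← σ.forall_congr_right (q := fun i => g i ≠ g (i + 1))]
  simp only [σ, Equiv.coe_addRight, add_right_comm _ s 1]

-- The cycle is cut open at `s`: its list is a singleton disjoint from the one before it, so the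
-- edge closing up the path is automatically proper.
lemma card_cycle_listColoring (V : Fin (n + 1) → Finset α) (w : Fin (n + 1) → ℕ)
    (hw : ∀ i, ∀ x ∈ V i, #((V (i + 1)).erase x) = w i) {s : Fin (n + 1)}
    (hV : #(V s) = 1) (hs : w (s - 1) = 1) :
    #{g ∈ Fintype.piFinset V | ∀ i, g i ≠ g (i + 1)} = ∏ i, w i := by
  have hlast : Fin.last n + s = s - 1 := by
    rw [eq_sub_iff_add_eq, add_right_comm, Fin.last_add_one, zero_add]
  rw [← card_cycle_listColoring_rotate V s, ← Equiv.prod_comp (Equiv.addRight s) w]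
  refine card_cycle_listColoring_of_last _ _ (fun i => ?_) (by rwa [zero_add]) ?_
  · simpa only [add_right_comm i 1 s, Equiv.coe_addRight] using hw (i + s)
  · simpa only [Equiv.coe_addRight, hlast] using hs

end ListColoring

section Cycle

variable {n : ℕ}

lemma forall_cycleGraph_adj_iff {r : Fin (n + 2) → Fin (n + 2) → Prop}
    (hr : ∀ i j, r i j → r j i) :
    (∀ i j, (cycleGraph (n + 2)).Adj i j → r i j) ↔ ∀ i, r i (i + 1) := by
  simp only [cycleGraph_adj, sub_eq_iff_eq_add]
  refine ⟨fun h i => h _ _ (.inr (add_comm _ _)), fun h i j hij => ?_⟩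
  obtain rfl | rfl := hij
  · exact hr _ _ (add_comm j 1 ▸ h j)
  · exact add_comm i 1 ▸ h i

lemma isIndepSet_cycleGraph_iff {S : Set (Fin (n + 2))} :
    (cycleGraph (n + 2)).IsIndepSet S ↔ ∀ i ∈ S, i + 1 ∉ S := by
  rw [← forall_cycleGraph_adj_iff (r := fun i j => i ∈ S → j ∉ S) fun i j h hj hi => h hi hj]
  exact ⟨fun h i j hij hi hj => h hi hj hij.ne hij, fun h i hi j hj _ hij => h i j hij hi hj⟩

variable {S : Finset (Fin (n + 2))}

lemma card_filter_mem_or_add_one_mem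
    (hS : (cycleGraph (n + 2)).IsIndepSet (S : Set (Fin (n + 2)))) :
    #{i | i ∈ S ∨ i + 1 ∈ S} = 2 * #S := by
  have hsucc : #{i | i + 1 ∈ S} = #S :=
    card_equiv (Equiv.addRight 1) fun i => by simp
  have hdisj : Disjoint (filter (· ∈ S) univ) (filter (· + 1 ∈ S) univ) :=
    disjoint_filter.2 fun i _ => isIndepSet_cycleGraph_iff.1 hS i
  rw [filter_or, card_union_of_disjoint hdisj, hsucc, filter_univ_mem, two_mul]

lemma two_mul_card_le_of_isIndepSet_cycleGraph
    (hS : (cycleGraph (n + 2)).IsIndepSet (S : Set (Fin (n + 2)))) : 2 * #S ≤ n + 2 := by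
  simpa [← card_filter_mem_or_add_one_mem hS] using card_filter_le univ fun i => i ∈ S ∨ i + 1 ∈ S

lemma indepSetFinset_cycleGraph_eq_empty {k : ℕ} (h : n + 2 < 2 * k) :
    (cycleGraph (n + 2)).indepSetFinset k = ∅ := by
  refine eq_empty_of_forall_notMem fun S hS => ?_
  obtain ⟨hindep, rfl⟩ := mem_indepSetFinset_iff.1 hS
  exact (two_mul_card_le_of_isIndepSet_cycleGraph hindep).not_gt h

lemma prod_ite_of_isIndepSet_cycleGraph {M : Type*} [CommMonoid M] (a b : M)
    (hS : (cycleGraph (n + 2)).IsIndepSet (S : Set (Fin (n + 2)))) :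
    ∏ i, (if i + 1 ∈ S then 1 else if i ∈ S then a else b) = a ^ #S * b ^ (n + 2 - 2 * #S) := by
  have hS' := isIndepSet_cycleGraph_iff.1 hS
  have hcard : #{i | ¬(i ∈ S ∨ i + 1 ∈ S)} = n + 2 - 2 * #S := by
    rw [← compl_filter, card_compl, card_filter_mem_or_add_one_mem hS, Fintype.card_fin]
  calc _ = ∏ i, (if i ∈ S then a else 1) * if i ∈ S ∨ i + 1 ∈ S then 1 else b := by
        refine prod_congr rfl fun i _ => ?_
        have := hS' i
        split_ifs <;> first | tauto | simp
    _ = _ := by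
        simp only [prod_mul_distrib, prod_ite, prod_const, one_pow, mul_one, one_mul, hcard,
          filter_univ_mem]

end Cycle

section ClassList

variable {ι β : Type*} [DecidableEq ι] [Fintype β] [DecidableEq β]

/-- The list assignment whose list colourings are the functions `ι → β` taking the value `b`
exactly on `S`; it turns a prescribed colour class into a list-colouring condition. -/
def classList (S : Finset ι) (b : β) (i : ι) : Finset β :=
  if i ∈ S then {b} else {b}ᶜ

variable {S : Finset ι} {b : β}

lemma mem_piFinset_classList [Fintype ι] {g : ι → β} :
    g ∈ Fintype.piFinset (classList S b) ↔ ∀ i, g i = b ↔ i ∈ S := by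
  refine Fintype.mem_piFinset.trans (forall_congr' fun i => ?_)
  by_cases hi : i ∈ S <;> simp [classList, hi]

lemma card_classList_erase {i j : ι} (hij : i ∈ S → j ∉ S) {x : β} (hx : x ∈ classList S b i) :
    #((classList S b j).erase x) =
      if j ∈ S then 1 else if i ∈ S then Fintype.card β - 1 else Fintype.card β - 2 := by
  unfold classList at hx ⊢
  by_cases hi : i ∈ S
  · obtain rfl : x = b := by simpa [hi] using hx
    rw [if_neg (hij hi), if_neg (hij hi), if_pos hi, erase_eq_of_notMem (by simp), card_compl,
      card_singleton]
  · have hxb : x ≠ b := by simpa [hi] using hx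
    split_ifs
    · rw [erase_eq_of_notMem (by simpa), card_singleton]
    · rw [card_erase_of_mem (by simpa), card_compl, card_singleton, Nat.sub_sub]

end ClassList

section Coloring

variable {n : ℕ} {β : Type*} [Fintype β] (b : β)

lemma natCard_coloring_cycleGraph_colorClass_eq {S : Finset (Fin (n + 2))} (hne : S.Nonempty)
    (hS : (cycleGraph (n + 2)).IsIndepSet (S : Set (Fin (n + 2)))) :
    Nat.card {C : (cycleGraph (n + 2)).Coloring β // C.colorClass b = S} =
      (Fintype.card β - 1) ^ #S * (Fintype.card β - 2) ^ (n + 2 - 2 * #S) := by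
  classical
  obtain ⟨s, hs⟩ := hne
  have hcount := card_cycle_listColoring (classList S b) _
    (fun i _ => card_classList_erase (isIndepSet_cycleGraph_iff.1 hS i)) (s := s)
    (by simp [classList, hs]) (by simp [hs])
  have proper_iff (g : Fin (n + 2) → β) :
      (∀ i j, (cycleGraph (n + 2)).Adj i j → g i ≠ g j) ↔ ∀ i, g i ≠ g (i + 1) :=
    forall_cycleGraph_adj_iff fun _ _ => Ne.symm
  rw [← prod_ite_of_isIndepSet_cycleGraph _ _ hS, ← hcount, Nat.card_eq_fintype_card,
    Fintype.card_subtype]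
  refine card_nbij (fun C => ⇑C) (fun C hC => ?_) DFunLike.coe_injective.injOn fun g hg => ?_
  · exact mem_filter.2 ⟨mem_piFinset_classList.2 (Set.ext_iff.1 (mem_filter.1 hC).2),
      (proper_iff C).1 fun _ _ => C.valid⟩
  · obtain ⟨hclass, hproper⟩ := mem_filter.1 hg
    exact ⟨Coloring.mk g fun {i j} => (proper_iff g).2 hproper i j,
      mem_filter.2 ⟨mem_univ _, Set.ext (mem_piFinset_classList.1 hclass)⟩, rfl⟩

lemma natCard_coloring_cycleGraph_ncard_colorClass {k : ℕ} (hk : k ≠ 0) :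
    Nat.card {C : (cycleGraph (n + 2)).Coloring β // (C.colorClass b).ncard = k} =
      #((cycleGraph (n + 2)).indepSetFinset k) *
        ((Fintype.card β - 1) ^ k * (Fintype.card β - 2) ^ (n + 2 - 2 * k)) := by
  classical
  simp only [Nat.card_eq_fintype_card, Fintype.card_subtype]
  rw [← smul_eq_mul, ← sum_const,
    card_eq_sum_card_fiberwise (f := fun C => (C.colorClass b).toFinset)
      (t := (cycleGraph (n + 2)).indepSetFinset k)]
  · refine sum_congr rfl fun S hS => ?_
    obtain ⟨hindep, rfl⟩ := mem_indepSetFinset_iff.1 hS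
    rw [← natCard_coloring_cycleGraph_colorClass_eq b (card_ne_zero.1 hk) hindep,
      Nat.card_eq_fintype_card, Fintype.card_subtype, filter_filter]
    refine congrArg card (filter_congr fun C _ => ?_)
    rw [← coe_inj, Set.coe_toFinset, and_iff_right_of_imp fun h => by rw [h, Set.ncard_coe_finset]]
  · intro C hC
    rw [mem_coe, mem_indepSetFinset_iff, isNIndepSet_iff, Set.coe_toFinset,
      ← Set.ncard_eq_toFinset_card']
    exact ⟨C.isIndepSet_colorClass b, (mem_filter.1 hC).2⟩

end Coloring

section GapSeq

variable {k n : ℕ}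

lemma seqOKGt1_iff {c : Fin k → Fin n} :
    SeqOKGt1 c ↔ ∀ a b, a < b → (c a).val + 2 ≤ (c b).val := by
  constructor
  · rintro ⟨hmono, hgap⟩ a b hab
    have hpred := (StrictMono.monotone fun _ _ => hmono _ _ : Monotone c)
      (show a ≤ ⟨b.val - 1, by omega⟩ from Nat.le_pred_of_lt hab)
    have := hgap b (Nat.ne_zero_of_lt hab)
    rw [gapAt] at this
    rw [Fin.le_def] at hpred
    omega
  · intro h
    refine ⟨fun a b hab => Fin.lt_def.2 (by have := h a b hab; omega), fun j hj => ?_⟩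
    have := h ⟨j.val - 1, by omega⟩ j (Nat.pred_lt hj)
    rw [gapAt]
    omega

lemma add_sum_sub_add_mul_eq_last {f : Fin (k + 1) → ℕ} {r : ℕ}
    (hf : ∀ j : Fin k, f j.castSucc + r ≤ f j.succ) :
    f 0 + ∑ j : Fin k, (f j.succ - f j.castSucc - r) + k * r = f (Fin.last k) := by
  induction k with
  | zero => simp
  | succ k ih =>
    have hinit := ih (f := Fin.init f) fun j => hf j.castSucc
    have hlast := hf (Fin.last k)
    simp only [Fin.sum_univ_castSucc, Fin.init, Fin.castSucc_zero, Fin.succ_castSucc,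
      Fin.succ_last, Nat.succ_eq_add_one, add_one_mul] at hinit hlast ⊢
    omega

lemma add_sum_gapAt_sub_two {c : Fin (k + 1) → Fin n} (hc : SeqOKGt1 c) :
    (c 0).val + ∑ j : Fin k, (gapAt c j.succ - 2) + k * 2 = (c (Fin.last k)).val :=
  add_sum_sub_add_mul_eq_last (f := fun j => (c j).val) fun j =>
    seqOKGt1_iff.1 hc _ _ j.castSucc_lt_succ

lemma hubGapProd_eq (m : ℕ) (c : Fin (k + 1) → Fin n) :
    hubGapProd m c = (m - 2) ^ k * (m - 3) ^ ∑ j : Fin k, (gapAt c j.succ - 2) := by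
  simp [hubGapProd, Fin.prod_univ_succ, prod_mul_distrib, prod_pow_eq_pow_sum]

/-- The sequences `i_1 < ⋯ < i_{k+1}` in `{1, …, n}` over which the three sums of the count jointly
range: consecutive entries, including `i_{k+1}` and `i_1`, are not adjacent on the cycle. -/
def IsCyclicGapSeq (c : Fin (k + 1) → Fin (n + 1)) : Prop :=
  SeqOKGt1 c ∧ 1 ≤ (c 0).val ∧ ¬((c 0).val = 1 ∧ (c (Fin.last k)).val = n)

lemma IsCyclicGapSeq.wrap_mul_hubGapProd (m : ℕ) {c : Fin (k + 1) → Fin (n + 1)}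
    (hc : IsCyclicGapSeq c) :
    (m - 2) * (m - 3) ^ ((c 0).val + n - (c (Fin.last k)).val - 2) * hubGapProd m c =
      (m - 2) ^ (k + 1) * (m - 3) ^ (n - 2 * (k + 1)) := by
  obtain ⟨hseq, h0, hwrap⟩ := hc
  have htotal := add_sum_gapAt_sub_two hseq
  have := (c (Fin.last k)).isLt
  have hexp : n - 2 * (k + 1) = ((c 0).val + n - (c (Fin.last k)).val - 2) +
      ∑ j : Fin k, (gapAt c j.succ - 2) := by omega
  rw [hubGapProd_eq, hexp, pow_add, pow_succ]
  ring

lemma IsCyclicGapSeq.ne_zero {c : Fin (k + 1) → Fin (n + 1)} (hc : IsCyclicGapSeq c)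
    (j : Fin (k + 1)) : c j ≠ 0 := by
  have hmono : StrictMono c := fun _ _ => hc.1.1 _ _
  have hpos : 0 < c 0 := Fin.lt_def.2 hc.2.1
  exact (hpos.trans_le (hmono.monotone (Fin.zero_le j))).ne'

open Classical in
lemma sum_isCyclicGapSeq {M : Type*} [AddCommMonoid M] (F : (Fin (k + 1) → Fin (n + 1)) → M) :
    ∑ c with IsCyclicGapSeq c, F c =
      ∑ c with SeqOKGt1 c ∧ 1 < (c 0).val ∧ (c (Fin.last k)).val = n, F c +
      ∑ c with SeqOKGt1 c ∧ (c 0).val = 1 ∧ (c (Fin.last k)).val < n, F c +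
      ∑ c with SeqOKGt1 c ∧ 1 < (c 0).val ∧ (c (Fin.last k)).val < n, F c := by
  rw [← sum_union (disjoint_filter.2 fun _ _ => by omega), ← filter_or,
    ← sum_union (disjoint_filter.2 fun _ _ => by omega), ← filter_or]
  refine sum_congr (filter_congr fun c _ => ?_) fun _ _ => rfl
  have := (c (Fin.last k)).isLt
  simp only [← and_or_left, IsCyclicGapSeq]
  exact and_congr_right fun _ => by omega

variable (k n) in
lemma sum_gapWeights (m : ℕ) :
    ∑ c : Fin (k + 1) → Fin (n + 1)
        with SeqOKGt1 c ∧ 1 < (c 0).val ∧ (c (Fin.last k)).val = n,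
      (m - 2) * (m - 3) ^ ((c 0).val - 2) * hubGapProd m c +
    ∑ c : Fin (k + 1) → Fin (n + 1)
        with SeqOKGt1 c ∧ (c 0).val = 1 ∧ (c (Fin.last k)).val < n,
      hubGapProd m c * ((m - 2) * (m - 3) ^ (n - (c (Fin.last k)).val - 1)) +
    ∑ c : Fin (k + 1) → Fin (n + 1)
        with SeqOKGt1 c ∧ 1 < (c 0).val ∧ (c (Fin.last k)).val < n,
      (m - 2) * (m - 3) ^ ((c 0).val + n - (c (Fin.last k)).val - 2) * hubGapProd m c =
    Nat.card {c : Fin (k + 1) → Fin (n + 1) // IsCyclicGapSeq c} *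
      ((m - 2) ^ (k + 1) * (m - 3) ^ (n - 2 * (k + 1))) := by
  classical
  rw [Nat.card_eq_fintype_card, Fintype.card_subtype, ← smul_eq_mul (#_), ← sum_const,
    ← sum_congr rfl fun c hc => IsCyclicGapSeq.wrap_mul_hubGapProd m (mem_filter.1 hc).2,
    sum_isCyclicGapSeq]
  congr 2 <;> refine sum_congr rfl fun c hc => ?_
  all_goals obtain ⟨-, h0, hlast⟩ := (mem_filter.1 hc).2
  · rw [hlast, Nat.add_sub_cancel]
  · rw [h0, mul_comm (hubGapProd m c)]
    congr 3
    omega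

lemma natCard_strictMono_range {α : Type*} [LinearOrder α] (P : Set α → Prop) :
    Nat.card {d : Fin k → α // StrictMono d ∧ P (Set.range d)} =
      Nat.card {S : Finset α // P S ∧ #S = k} := by
  refine Nat.card_congr
    { toFun d := ⟨univ.image d.1, by simpa using d.2.2, by
        rw [card_image_of_injective _ d.2.1.injective, card_fin]⟩
      invFun S :=
        ⟨S.1.orderEmbOfFin S.2.2, (S.1.orderEmbOfFin _).strictMono, by simpa using S.2.1⟩
      left_inv d := Subtype.ext (orderEmbOfFin_unique _ (by simp) d.2.1).symm
      right_inv S := Subtype.ext (by simp) }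

lemma isCyclicGapSeq_succ_iff {d : Fin (k + 1) → Fin (n + 2)} :
    IsCyclicGapSeq (fun j => (d j).succ) ↔
      StrictMono d ∧ (cycleGraph (n + 2)).IsIndepSet (Set.range d) := by
  have hrange : (cycleGraph (n + 2)).IsIndepSet (Set.range d) ↔
      ∀ a b, (d b).val ≠ if (d a).val = n + 1 then 0 else (d a).val + 1 := by
    rw [isIndepSet_cycleGraph_iff, Set.forall_mem_range]
    simp only [Set.mem_range, not_exists, Fin.ext_iff, Fin.val_add_one, Fin.val_last, ne_eq]
  simp only [IsCyclicGapSeq, seqOKGt1_iff, hrange, Fin.val_succ]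
  constructor
  · rintro ⟨hgap, -, hwrap⟩
    have hmono : StrictMono d := fun a b hab => Fin.lt_def.2 (by have := hgap a b hab; omega)
    refine ⟨hmono, fun a b hab => ?_⟩
    split_ifs at hab with ha
    · have := hmono.monotone (Fin.zero_le b)
      have := hmono.monotone (Fin.le_last a)
      rw [Fin.le_def] at *
      omega
    · have : a < b := hmono.lt_iff_lt.1 (Fin.lt_def.2 (by omega))
      have := hgap a b this
      omega
  · rintro ⟨hmono, hindep⟩
    refine ⟨fun a b hab => ?_, by omega, fun h => hindep (Fin.last k) 0 ?_⟩
    · have := hindep a b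
      have : (d a).val < (d b).val := hmono hab
      have := (d b).isLt
      split_ifs at * <;> omega
    · split_ifs <;> omega

variable (k n) in
lemma natCard_isCyclicGapSeq :
    Nat.card {c : Fin (k + 1) → Fin (n + 3) // IsCyclicGapSeq c} =
      #((cycleGraph (n + 2)).indepSetFinset (k + 1)) := by
  rw [indepSetFinset, ← Fintype.card_subtype, ← Nat.card_eq_fintype_card]
  simp only [isNIndepSet_iff]
  rw [← natCard_strictMono_range]
  refine (Nat.card_eq_of_bijective
    (fun d => ⟨fun j => (d.1 j).succ, isCyclicGapSeq_succ_iff.2 d.2⟩) ⟨?_, ?_⟩).symm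
  · exact fun d d' h => Subtype.ext <| funext fun j =>
      Fin.succ_injective _ <| congrFun (Subtype.mk.inj h) j
  · rintro ⟨c, hc⟩
    choose d hd using fun j => Fin.exists_succ_eq.2 (hc.ne_zero j)
    obtain rfl : (fun j => (d j).succ) = c := funext hd
    exact ⟨⟨d, isCyclicGapSeq_succ_iff.1 hc⟩, rfl⟩

end GapSeq

section Wheel

variable {n m k : ℕ}

lemma wheelGraph_adj_zero_succ (i : Fin n) : (wheelGraph n).Adj 0 i.succ := by
  simp [wheelGraph, fromRel_adj, (Fin.succ_ne_zero i).symm]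

lemma wheelGraph_adj_succ_succ {i j : Fin (n + 2)} :
    (wheelGraph (n + 2)).Adj i.succ j.succ ↔ (cycleGraph (n + 2)).Adj i j := by
  simp only [wheelGraph, fromRel_adj, cycleGraph_adj, sub_eq_iff_eq_add', Fin.ext_iff,
    Fin.val_add_one, Fin.val_succ, Fin.val_last, ne_eq]
  have := i.isLt
  have := j.isLt
  split_ifs <;> grind

/-- With the hub coloured `A`, a colouring of the wheel amounts to a colouring of its rim by the
remaining colours. -/
def wheelHomEquiv {α : Type*} (A : α) (n : ℕ) :
    {f : wheelGraph (n + 2) →g (⊤ : SimpleGraph α) // f 0 = A} ≃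
      (cycleGraph (n + 2)).Coloring {x // x ≠ A} where
  toFun f := Coloring.mk
    (fun i => ⟨f.1 i.succ, by
      simpa only [f.2] using (f.1.map_adj (wheelGraph_adj_zero_succ i)).ne'⟩)
    fun {i j} hij h => (f.1.map_adj (wheelGraph_adj_succ_succ.2 hij)).ne (Subtype.mk.inj h)
  invFun C := ⟨⟨Fin.cons A fun i => (C i : α), fun {i j} => by
    refine Fin.cases ?_ (fun i => ?_) i <;> refine Fin.cases ?_ (fun j => ?_) j <;> intro hij
    · exact (hij.ne rfl).elim
    · exact (C j).2.symm
    · exact (C i).2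
    · exact Subtype.coe_injective.ne (C.valid (wheelGraph_adj_succ_succ.1 hij))⟩, rfl⟩
  left_inv f := Subtype.ext (DFunLike.ext _ _ (Fin.cases f.2.symm fun _ => rfl))
  right_inv _ := rfl

lemma finset_pair_eq_pair_iff {α : Type*} [DecidableEq α] {a b c d : α} :
    ({a, b} : Finset α) = {c, d} ↔ a = c ∧ b = d ∨ a = d ∧ b = c := by
  rw [← coe_inj, coe_pair, coe_pair, Set.pair_eq_pair_iff]

lemma wEdgeCount_comm (A B : Fin m) : wEdgeCount n m A B = wEdgeCount n m B A := by
  funext f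
  simp only [wEdgeCount, pair_comm A B]

lemma wEdgeCount_eq_card_of_hub {A B : Fin m} {f : Fin (n + 2) → Fin m}
    (hub : f 0 = A) (hrim : ∀ i : Fin (n + 1), f i.succ ≠ A) :
    wEdgeCount (n + 1) m A B f = #{i : Fin (n + 1) | f i.succ = B} := by
  have hrim' (i : Fin (n + 2)) (hi : i.val ≠ 0) : f i ≠ A := by
    obtain ⟨j, rfl⟩ := Fin.exists_succ_eq.2 fun h : i = 0 => hi (by simp [h])
    exact hrim j
  have hpair (i j : Fin (n + 2)) (hi : i.val ≠ 0) (hj : j.val ≠ 0) :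
      ({f i, f j} : Finset (Fin m)) ≠ {A, B} := by
    have := hrim' i hi
    have := hrim' j hj
    rw [ne_eq, finset_pair_eq_pair_iff]
    tauto
  unfold wEdgeCount
  rw [if_neg (hpair _ _ (by simp) (by simp)), add_zero,
    filter_false_of_mem (s := (univ : Finset (Fin (n + 1)))) fun i _ hi =>
      hpair _ _ hi.1 (by simp) hi.2,
    card_empty, add_zero, Fin.card_filter_univ_succ]
  simp [hub, finset_pair_eq_pair_iff, hrim]

lemma wEdgeCount_eq_ncard_colorClass {A B : Fin m} (hAB : B ≠ A)
    (f : {f : wheelGraph (n + 2) →g (⊤ : SimpleGraph (Fin m)) // f 0 = A}) :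
    wEdgeCount (n + 2) m A B f.1 = ((wheelHomEquiv A n f).colorClass ⟨B, hAB⟩).ncard := by
  rw [wEdgeCount_eq_card_of_hub f.2 fun i => (wheelHomEquiv A n f i).2, ← Set.ncard_coe_finset]
  congr 1
  ext i
  exact (mem_filter_univ i).trans
    (Subtype.ext_iff (a1 := wheelHomEquiv A n f i) (a2 := ⟨B, hAB⟩)).symm

lemma natCard_wheelHom_hub_eq (hk : k ≠ 0) {A B : Fin m} (hAB : A ≠ B) :
    Nat.card {f : wheelGraph (n + 2) →g (⊤ : SimpleGraph (Fin m)) //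
      f 0 = A ∧ wEdgeCount (n + 2) m A B f = k} =
    #((cycleGraph (n + 2)).indepSetFinset k) * ((m - 2) ^ k * (m - 3) ^ (n + 2 - 2 * k)) := by
  have hcard : Fintype.card {x : Fin m // x ≠ A} = m - 1 := by
    simp [Fintype.card_subtype_compl]
  calc _ = Nat.card {C : (cycleGraph (n + 2)).Coloring {x // x ≠ A} //
          (C.colorClass ⟨B, hAB.symm⟩).ncard = k} :=
        Nat.card_congr <| (Equiv.subtypeSubtypeEquivSubtypeInter _ _).symm.trans <|
          (wheelHomEquiv A n).subtypeEquiv fun f => by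
            rw [wEdgeCount_eq_ncard_colorClass hAB.symm f]
    _ = _ := by
      rw [natCard_coloring_cycleGraph_ncard_colorClass _ hk, hcard, Nat.sub_sub, Nat.sub_sub]

lemma natCard_wheelHom_hub_mem_pair (hk : k ≠ 0) {A B : Fin m} (hAB : A ≠ B) :
    Nat.card {f : wheelGraph (n + 2) →g (⊤ : SimpleGraph (Fin m)) //
      f 0 ∈ ({A, B} : Set (Fin m)) ∧ wEdgeCount (n + 2) m A B f = k} =
    2 * (#((cycleGraph (n + 2)).indepSetFinset k) *
      ((m - 2) ^ k * (m - 3) ^ (n + 2 - 2 * k))) := by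
  classical
  have hA := natCard_wheelHom_hub_eq (n := n) hk hAB
  have hB := natCard_wheelHom_hub_eq (n := n) hk hAB.symm
  rw [wEdgeCount_comm] at hB
  have hdisj : Disjoint
      (fun f : wheelGraph (n + 2) →g (⊤ : SimpleGraph (Fin m)) =>
        f 0 = A ∧ wEdgeCount (n + 2) m A B f = k)
      (fun f => f 0 = B ∧ wEdgeCount (n + 2) m A B f = k) :=
    Pi.disjoint_iff.2 fun f => Prop.disjoint_iff.2 fun ⟨hfA, hfB⟩ =>
      hAB (hfA.1.symm.trans hfB.1)
  simp only [Set.mem_insert_iff, Set.mem_singleton_iff, or_and_right]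
  rw [Nat.card_congr (subtypeOrEquiv _ _ hdisj), Nat.card_sum, hA, hB, two_mul (_ * _)]

end Wheel

/-- For `n ≥ 3`, `m ≥ 3`, distinct vertices `A`, `B` of `K_m`, and `1 ≤ k ≤ n'`
(where `n = 2n'` if `n` is even and `n = 2n' + 1` if `n` is odd): the number of graph
homomorphisms `f : W_n → K_m` mapping the hub into `{A, B}` and mapping exactly `k`
edges of `W_n` onto `{A, B}` is given by the three-fold sum over strictly increasing
sequences `i_1 < ⋯ < i_k` with `i_j - i_{j-1} > 1`; moreover for `n' < k ≤ n` there are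
no such homomorphisms. -/
theorem stmt13 (n m n' k : ℕ) (hn : 3 ≤ n) (hm : 3 ≤ m)
    (A B : Fin m) (hAB : A ≠ B)
    (heven : Even n → n = 2 * n') (hodd : ¬ Even n → n = 2 * n' + 1)
    (hk1 : 1 ≤ k) (hk2 : k ≤ n')
    (N : ℕ → ℕ)
    (hN : ∀ j : ℕ, N j = Nat.card
      {f : wheelGraph n →g (⊤ : SimpleGraph (Fin m)) //
        f ⟨0, Nat.succ_pos n⟩ ∈ ({A, B} : Set (Fin m)) ∧ wEdgeCount n m A B ⇑f = j}) :
    (N k =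
        2 * (∑ c ∈ Finset.univ.filter (fun c : Fin k → Fin (n + 1) =>
              SeqOKGt1 c ∧ 1 < (c ⟨0, by omega⟩).val ∧ (c ⟨k - 1, by omega⟩).val = n),
            (m - 2) * (m - 3) ^ ((c ⟨0, by omega⟩).val - 2) * hubGapProd m c)
        + 2 * (∑ c ∈ Finset.univ.filter (fun c : Fin k → Fin (n + 1) =>
              SeqOKGt1 c ∧ (c ⟨0, by omega⟩).val = 1 ∧ (c ⟨k - 1, by omega⟩).val < n),
            hubGapProd m c * ((m - 2) * (m - 3) ^ (n - (c ⟨k - 1, by omega⟩).val - 1)))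
        + 2 * (∑ c ∈ Finset.univ.filter (fun c : Fin k → Fin (n + 1) =>
              SeqOKGt1 c ∧ 1 < (c ⟨0, by omega⟩).val ∧ (c ⟨k - 1, by omega⟩).val < n),
            (m - 2) * (m - 3) ^ ((c ⟨0, by omega⟩).val + n - (c ⟨k - 1, by omega⟩).val - 2)
              * hubGapProd m c))
    ∧ (∀ j : ℕ, n' < j → j ≤ n → N j = 0) := by
  obtain ⟨n, rfl⟩ : ∃ t, n = t + 2 := ⟨n - 2, by omega⟩
  obtain ⟨k, rfl⟩ : ∃ l, k = l + 1 := ⟨k - 1, by omega⟩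
  have hcount (j : ℕ) (hj : j ≠ 0) := (hN j).trans (natCard_wheelHom_hub_mem_pair hj hAB)
  constructor
  · rw [hcount _ k.succ_ne_zero, ← natCard_isCyclicGapSeq, ← sum_gapWeights, mul_add, mul_add]
    rfl
  · intro j hj _
    have hlarge : n + 2 < 2 * j := by by_cases h : Even (n + 2) <;> grind
    rw [hcount j (by omega), indepSetFinset_cycleGraph_eq_empty hlarge, card_empty, zero_mul,
      mul_zero]
end
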